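/- arXiv:1809.00565 — 7 statements merged into one kernel-verified Lean document; each statement's English description precedes it below -/
import Mathlib

section
/- Let n ≥ 2 and let (V, [·,…,·], S) be a generalized metric n-Leibniz algebra over ℝ. Then for all v₁, …, v_n ∈ V one has Σ_{i=1}^{n-1} [v_i, v₁, …, v_{i-1}, v̂_i, v_{i+1}, …, v_{n-1}, v_n] = 0, where v̂_i means that v_i is omitted (i.e. the bracket has first argument v_i, then v₁,…,v_{n-1} with v_i removed in order, and last argument v_n). -/
open Function

/-- Let `n = m + 2 ≥ 2` and let `(V, [·,…,·], S)` be a generalized metric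
`n`-Leibniz algebra over `ℝ`: the `n`-linear bracket `br` satisfies the fundamental identity,
and the `(n-1)`-linear form `S` is symmetric, non-degenerate and satisfies the unitarity and
symmetry conditions.  Then for all `v₁, …, v_{n-1} ∈ V` and `v_n ∈ V`,
`Σ_{i=1}^{n-1} [v_i, v₁, …, v̂_i, …, v_{n-1}, v_n] = 0`. -/
theorem statement0 (m : ℕ) {V : Type*} [AddCommGroup V] [Module ℝ V]
    (br : MultilinearMap ℝ (fun _ : Fin (m + 2) => V) V)
    (S : MultilinearMap ℝ (fun _ : Fin (m + 1) => V) ℝ)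
    -- fundamental identity
    (hFI : ∀ (u : Fin (m + 1) → V) (v : Fin (m + 2) → V),
      br (Fin.snoc u (br v)) =
        ∑ i : Fin (m + 2), br (Function.update v i (br (Fin.snoc u (v i)))))
    -- `S` is symmetric
    (hSsymm : ∀ (σ : Equiv.Perm (Fin (m + 1))) (w : Fin (m + 1) → V), S (w ∘ σ) = S w)
    -- `S` is non-degenerate
    (hSnd : ∀ u : V, (∀ w : Fin (m + 1) → V, S (Function.update w 0 u) = 0) → u = 0)
    -- unitarity condition
    (hUnit : ∀ (u w : Fin (m + 1) → V),
      ∑ i : Fin (m + 1), S (Function.update w i (br (Fin.snoc u (w i)))) = 0)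
    -- symmetry condition
    (hSymCond : ∀ (u v : Fin (m + 1) → V),
      S (Function.update v 0 (br (Fin.snoc u (v 0)))) =
        S (Function.update u 0 (br (Fin.snoc v (u 0))))) :
    ∀ (v : Fin (m + 1) → V) (vn : V),
      ∑ i : Fin (m + 1),
        br (Fin.snoc (Fin.cons (v i) (fun j : Fin m => v (i.succAbove j)) : Fin (m + 1) → V) vn)
          = 0 := by
  intro v vn
  apply hSnd
  intro w
  have key : ∀ i : Fin (m + 1),
      S (Function.update w 0 (br (Fin.snoc
        (Fin.cons (v i) (fun j : Fin m => v (i.succAbove j)) : Fin (m + 1) → V) vn))) =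
      S (Function.update v i (br (Fin.snoc (Function.update w 0 vn) (v i)))) := by
    intro i
    have h := hSymCond (Fin.cons (v i) (fun j : Fin m => v (i.succAbove j)))
      (Function.update w 0 vn)
    rw [Function.update_self, Function.update_idem, Fin.cons_zero, Fin.update_cons_zero] at h
    rw [h, ← hSsymm i.cycleRange.symm (Function.update v i _)]
    congr 1
    funext j
    refine Fin.cases ?_ (fun k => ?_) j
    · simp [Fin.cycleRange_symm_zero]
    · simp [Fin.cycleRange_symm_succ, Fin.succAbove_ne]
  have hs := MultilinearMap.map_update_sum S Finset.univ (0 : Fin (m + 1))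
    (fun i : Fin (m + 1) => br (Fin.snoc
      (Fin.cons (v i) (fun j : Fin m => v (i.succAbove j)) : Fin (m + 1) → V) vn)) w
  rw [hs, Finset.sum_congr rfl (fun i _ => key i)]
  exact hUnit _ _
end

section
/- Let n ≥ 2 and let (V, [·,…,·], S) be a finite-dimensional generalized metric n-Leibniz algebra over ℝ, with D(u₁,…,u_{n-1}) ∈ gl(V) defined by D(u₁,…,u_{n-1})v = [u₁,…,u_{n-1},v], and let g be the linear span of {D(u₁,…,u_{n-1}) : u_i ∈ V} in gl(V). Then there exists a bilinear form ω on g such that ω(D(u₁,…,u_{n-1}), D(v₁,…,v_{n-1})) = S([u₁,…,u_{n-1},v₁], v₂,…,v_{n-1}) for all u₁,…,u_{n-1},v₁,…,v_{n-1} ∈ V, and this ω is symmetric, non-degenerate, and ad-invariant (ω([x,y],z) = −ω(y,[x,z]) for all x,y,z ∈ g); hence (g, [·,·], ω) is a metric Lie algebra. -/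
open Function

/-- The operator `D(u₁,…,u_{n-1}) ∈ gl(V)`, `D(u₁,…,u_{n-1})v = [u₁,…,u_{n-1},v]`. -/
noncomputable def Dop (m : ℕ) {V : Type*} [AddCommGroup V] [Module ℝ V]
    (br : MultilinearMap ℝ (fun _ : Fin (m + 2) => V) V)
    (u : Fin (m + 1) → V) : Module.End ℝ V where
  toFun v := br (Fin.snoc u v)
  map_add' x y := by
    simpa [Fin.update_snoc_last] using br.map_update_add (Fin.snoc u x) (Fin.last (m + 1)) x y
  map_smul' c x := by
    simpa [Fin.update_snoc_last] using br.map_update_smul (Fin.snoc u x) (Fin.last (m + 1)) c x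

/-- The linear span `g` of `{D(u₁,…,u_{n-1})}` inside `gl(V)`. -/
noncomputable def gSpan (m : ℕ) {V : Type*} [AddCommGroup V] [Module ℝ V]
    (br : MultilinearMap ℝ (fun _ : Fin (m + 2) => V) V) :
    Submodule ℝ (Module.End ℝ V) :=
  Submodule.span ℝ (Set.range (Dop m br))


section Helpers

variable {m : ℕ} {V : Type*} [AddCommGroup V] [Module ℝ V]

theorem end_add_lie (x y z : Module.End ℝ V) : ⁅x + y, z⁆ = ⁅x, z⁆ + ⁅y, z⁆ := by
  simp only [Ring.lie_def]; noncomm_ring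

theorem end_lie_add (x y z : Module.End ℝ V) : ⁅x, y + z⁆ = ⁅x, y⁆ + ⁅x, z⁆ := by
  simp only [Ring.lie_def]; noncomm_ring

theorem end_smul_lie (c : ℝ) (x y : Module.End ℝ V) : ⁅c • x, y⁆ = c • ⁅x, y⁆ := by
  simp only [Ring.lie_def, smul_mul_assoc, mul_smul_comm, smul_sub]

theorem end_lie_smul (c : ℝ) (x y : Module.End ℝ V) : ⁅x, c • y⁆ = c • ⁅x, y⁆ := by
  simp only [Ring.lie_def, smul_mul_assoc, mul_smul_comm, smul_sub]

theorem Dop_apply (br : MultilinearMap ℝ (fun _ : Fin (m + 2) => V) V)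
    (u : Fin (m + 1) → V) (v : V) : Dop m br u v = br (Fin.snoc u v) := rfl

theorem Dop_update_add (br : MultilinearMap ℝ (fun _ : Fin (m + 2) => V) V)
    (w : Fin (m + 1) → V) (i : Fin (m + 1)) (a b : V) :
    Dop m br (update w i (a + b)) = Dop m br (update w i a) + Dop m br (update w i b) := by
  ext v
  simp [Dop_apply, Fin.snoc_update]

theorem Dop_update_smul (br : MultilinearMap ℝ (fun _ : Fin (m + 2) => V) V)
    (w : Fin (m + 1) → V) (i : Fin (m + 1)) (c : ℝ) (a : V) :
    Dop m br (update w i (c • a)) = c • Dop m br (update w i a) := by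
  ext v
  simp [Dop_apply, Fin.snoc_update]

/-- The pairing `S(x v₁, v₂, …)`, linear in the endomorphism `x`. -/
noncomputable def pairB (S : MultilinearMap ℝ (fun _ : Fin (m + 1) => V) ℝ)
    (v : Fin (m + 1) → V) : Module.End ℝ V →ₗ[ℝ] ℝ where
  toFun x := S (update v 0 (x (v 0)))
  map_add' x y := by simp
  map_smul' c x := by simp

theorem pairB_apply (S : MultilinearMap ℝ (fun _ : Fin (m + 1) => V) ℝ)
    (v : Fin (m + 1) → V) (x : Module.End ℝ V) :
    pairB S v x = S (update v 0 (x (v 0))) := rfl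

theorem bracket_Dop (br : MultilinearMap ℝ (fun _ : Fin (m + 2) => V) V)
    (hFI : ∀ (u : Fin (m + 1) → V) (v : Fin (m + 2) → V),
      br (Fin.snoc u (br v)) =
        ∑ i : Fin (m + 2), br (Function.update v i (br (Fin.snoc u (v i)))))
    (x : Module.End ℝ V) (hx : x ∈ gSpan m br) (w : Fin (m + 1) → V) :
    ⁅x, Dop m br w⁆ = ∑ i, Dop m br (update w i (x (w i))) := by
  unfold gSpan at hx
  induction hx using Submodule.span_induction with
  | mem x h =>
    obtain ⟨u, rfl⟩ := h
    ext v
    have h := hFI u (Fin.snoc w v)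
    rw [Fin.sum_univ_castSucc] at h
    simp only [Fin.snoc_castSucc, Fin.snoc_last, Fin.update_snoc_last, ← Fin.snoc_update] at h
    simp only [Ring.lie_def, LinearMap.sub_apply, Module.End.mul_apply, LinearMap.sum_apply,
      Dop_apply]
    rw [h]
    simp
  | zero =>
    have : ∀ i, Dop m br (update w i 0) = 0 := fun i => by
      simpa using Dop_update_smul br w i 0 0
    simp [this, Ring.lie_def]
  | add x y _ _ hx hy =>
    simp only [end_add_lie, hx, hy, LinearMap.add_apply, Dop_update_add, Finset.sum_add_distrib]
  | smul c x _ hx =>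
    simp only [end_smul_lie, hx, LinearMap.smul_apply, Dop_update_smul, Finset.smul_sum]

theorem lie_mem_gSpan (br : MultilinearMap ℝ (fun _ : Fin (m + 2) => V) V)
    (hFI : ∀ (u : Fin (m + 1) → V) (v : Fin (m + 2) → V),
      br (Fin.snoc u (br v)) =
        ∑ i : Fin (m + 2), br (Function.update v i (br (Fin.snoc u (v i)))))
    (x z : Module.End ℝ V) (hx : x ∈ gSpan m br) (hz : z ∈ gSpan m br) :
    ⁅x, z⁆ ∈ gSpan m br := by
  have hz' := hz
  unfold gSpan at hz'
  induction hz' using Submodule.span_induction with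
  | mem z h =>
    obtain ⟨w, rfl⟩ := h
    rw [bracket_Dop br hFI x hx w]
    exact Submodule.sum_mem _ fun i _ => Submodule.subset_span ⟨_, rfl⟩
  | zero => simp [Ring.lie_def]
  | add a b ha hb h1 h2 =>
    rw [end_lie_add]
    exact Submodule.add_mem _ (h1 ha) (h2 hb)
  | smul c a ha h1 =>
    rw [end_lie_smul]
    exact Submodule.smul_mem _ _ (h1 ha)

theorem unit_gSpan (br : MultilinearMap ℝ (fun _ : Fin (m + 2) => V) V)
    (S : MultilinearMap ℝ (fun _ : Fin (m + 1) => V) ℝ)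
    (hUnit : ∀ (u w : Fin (m + 1) → V),
      ∑ i : Fin (m + 1), S (Function.update w i (br (Fin.snoc u (w i)))) = 0)
    (x : Module.End ℝ V) (hx : x ∈ gSpan m br) (w : Fin (m + 1) → V) :
    ∑ i, S (update w i (x (w i))) = 0 := by
  unfold gSpan at hx
  induction hx using Submodule.span_induction with
  | mem x h =>
    obtain ⟨u, rfl⟩ := h
    exact hUnit u w
  | zero => simp
  | add x y _ _ hx hy =>
    simp [hx, hy, Finset.sum_add_distrib]
  | smul c x _ hx =>
    simp [← Finset.mul_sum, hx]

theorem pairB_invariant (br : MultilinearMap ℝ (fun _ : Fin (m + 2) => V) V)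
    (S : MultilinearMap ℝ (fun _ : Fin (m + 1) => V) ℝ)
    (hUnit : ∀ (u w : Fin (m + 1) → V),
      ∑ i : Fin (m + 1), S (Function.update w i (br (Fin.snoc u (w i)))) = 0)
    (x y : Module.End ℝ V) (hx : x ∈ gSpan m br) (w : Fin (m + 1) → V) :
    pairB S w ⁅x, y⁆ = - ∑ i, pairB S (update w i (x (w i))) y := by
  have h := unit_gSpan br S hUnit x hx (update w 0 (y (w 0)))
  rw [Fin.sum_univ_succ] at h
  rw [Fin.sum_univ_succ, Ring.lie_def, map_sub]
  simp only [pairB_apply, Module.End.mul_apply, update_self, update_idem] at h ⊢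
  have e : ∀ i : Fin m, S (update (update w i.succ (x (w i.succ))) 0
      (y (update w i.succ (x (w i.succ)) 0))) =
      S (update (update w 0 (y (w 0))) i.succ (x (update w 0 (y (w 0)) i.succ))) := by
    intro i
    rw [update_of_ne (Fin.succ_ne_zero i).symm, update_of_ne (Fin.succ_ne_zero i),
      update_comm (Fin.succ_ne_zero i)]
  rw [Finset.sum_congr rfl fun i _ => e i]
  linarith

/-- Existence of the form together with its full description on generators. -/
theorem exists_form (br : MultilinearMap ℝ (fun _ : Fin (m + 2) => V) V)
    (S : MultilinearMap ℝ (fun _ : Fin (m + 1) => V) ℝ)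
    (hSymCond : ∀ (u v : Fin (m + 1) → V),
      S (Function.update v 0 (br (Fin.snoc u (v 0)))) =
        S (Function.update u 0 (br (Fin.snoc v (u 0))))) :
    ∃ ω : gSpan m br →ₗ[ℝ] gSpan m br →ₗ[ℝ] ℝ,
      ∀ (x : gSpan m br) (v : Fin (m + 1) → V) (hv : Dop m br v ∈ gSpan m br),
        ω x ⟨Dop m br v, hv⟩ = pairB S v x := by
  let L : ((Fin (m + 1) → V) →₀ ℝ) →ₗ[ℝ] Module.End ℝ V :=
    Finsupp.linearCombination ℝ (Dop m br)
  have hsec : ∀ y : gSpan m br, y.1 ∈ LinearMap.range L := fun y => by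
    have h : gSpan m br ≤ LinearMap.range L := (Finsupp.range_linearCombination ℝ).ge
    exact h y.2
  let ι : gSpan m br →ₗ[ℝ] LinearMap.range L := LinearMap.codRestrict _ (gSpan m br).subtype hsec
  obtain ⟨s, hs⟩ := L.rangeRestrict.exists_rightInverse_of_surjective L.range_rangeRestrict
  have hLs : ∀ y : gSpan m br, L (s (ι y)) = y.1 := fun y =>
    congrArg Subtype.val (LinearMap.congr_fun hs (ι y))
  let T : ((Fin (m + 1) → V) →₀ ℝ) →ₗ[ℝ] Module.End ℝ V →ₗ[ℝ] ℝ :=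
    Finsupp.linearCombination ℝ (pairB S)
  refine ⟨(T.flip ∘ₗ (gSpan m br).subtype).compl₂ (s ∘ₗ ι), ?_⟩
  have key : ∀ u (f : (Fin (m + 1) → V) →₀ ℝ), T f (Dop m br u) = pairB S u (L f) := by
    intro u f
    induction f using Finsupp.induction_linear with
    | zero => simp
    | add f g hf hg => simp [hf, hg]
    | single w c =>
      simp only [T, L, Finsupp.linearCombination_single, LinearMap.smul_apply, map_smul]
      congr 1
      exact hSymCond u w
  rintro ⟨x, hx⟩ v hv
  simp only [LinearMap.compl₂_apply, LinearMap.comp_apply, LinearMap.flip_apply,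
    Submodule.subtype_apply]
  unfold gSpan at hx
  induction hx using Submodule.span_induction with
  | mem x h =>
    obtain ⟨u, rfl⟩ := h
    rw [key, hLs]
    exact (hSymCond u v).symm
  | zero => simp
  | add x y _ _ hx hy => rw [map_add, map_add, hx, hy]
  | smul c x _ hx => rw [map_smul, map_smul, hx]

theorem gSpan_induction (br : MultilinearMap ℝ (fun _ : Fin (m + 2) => V) V)
    (f g : gSpan m br →ₗ[ℝ] ℝ)
    (h : ∀ (v : Fin (m + 1) → V) (hv : Dop m br v ∈ gSpan m br),
      f ⟨Dop m br v, hv⟩ = g ⟨Dop m br v, hv⟩) : f = g := by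
  ext ⟨x, hx⟩
  have hx' := hx
  unfold gSpan at hx'
  induction hx' using Submodule.span_induction with
  | mem x h' =>
    obtain ⟨u, rfl⟩ := h'
    exact h u _
  | zero => exact (map_zero f).trans (map_zero g).symm
  | add a b ha hb h1 h2 =>
    have e := congrArg₂ (· + ·) (h1 ha) (h2 hb)
    simp only [← map_add] at e
    exact e
  | smul c a ha h1 =>
    have e := congrArg (c • ·) (h1 ha)
    simp only [← map_smul] at e
    exact e

end Helpers

/-- Let `n = m + 2 ≥ 2` and let `(V, [·,…,·], S)` be a finite-dimensional
generalized metric `n`-Leibniz algebra over `ℝ`, and let `g` be the span of the operators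
`D(u₁,…,u_{n-1})` in `gl(V)`.  Then there is a bilinear form `ω` on `g` with
`ω(D(u₁,…,u_{n-1}), D(v₁,…,v_{n-1})) = S([u₁,…,u_{n-1},v₁], v₂,…,v_{n-1})`, and `ω` is
symmetric, non-degenerate and ad-invariant; hence `(g, [·,·], ω)` is a metric Lie algebra. -/
theorem statement3 (m : ℕ) {V : Type*} [AddCommGroup V] [Module ℝ V] [FiniteDimensional ℝ V]
    (br : MultilinearMap ℝ (fun _ : Fin (m + 2) => V) V)
    (S : MultilinearMap ℝ (fun _ : Fin (m + 1) => V) ℝ)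
    -- fundamental identity
    (hFI : ∀ (u : Fin (m + 1) → V) (v : Fin (m + 2) → V),
      br (Fin.snoc u (br v)) =
        ∑ i : Fin (m + 2), br (Function.update v i (br (Fin.snoc u (v i)))))
    -- `S` is symmetric
    (hSsymm : ∀ (σ : Equiv.Perm (Fin (m + 1))) (w : Fin (m + 1) → V), S (w ∘ σ) = S w)
    -- `S` is non-degenerate
    (hSnd : ∀ u : V, (∀ w : Fin (m + 1) → V, S (Function.update w 0 u) = 0) → u = 0)
    -- unitarity condition
    (hUnit : ∀ (u w : Fin (m + 1) → V),
      ∑ i : Fin (m + 1), S (Function.update w i (br (Fin.snoc u (w i)))) = 0)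
    -- symmetry condition
    (hSymCond : ∀ (u v : Fin (m + 1) → V),
      S (Function.update v 0 (br (Fin.snoc u (v 0)))) =
        S (Function.update u 0 (br (Fin.snoc v (u 0))))) :
    ∃ ω : (gSpan m br : Submodule ℝ (Module.End ℝ V)) →ₗ[ℝ]
        (gSpan m br : Submodule ℝ (Module.End ℝ V)) →ₗ[ℝ] ℝ,
      -- the defining property of `ω`
      (∀ u v : Fin (m + 1) → V,
        ω ⟨Dop m br u, Submodule.subset_span ⟨u, rfl⟩⟩
            ⟨Dop m br v, Submodule.subset_span ⟨v, rfl⟩⟩ =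
          S (Function.update v 0 (br (Fin.snoc u (v 0))))) ∧
      -- `ω` is symmetric
      (∀ x y, ω x y = ω y x) ∧
      -- `ω` is non-degenerate
      (∀ x, (∀ y, ω x y = 0) → x = 0) ∧
      -- `ω` is ad-invariant: `ω([x,y],z) = −ω(y,[x,z])`
      (∀ (x y z : gSpan m br)
          (hxy : ⁅(x : Module.End ℝ V), (y : Module.End ℝ V)⁆ ∈ gSpan m br)
          (hxz : ⁅(x : Module.End ℝ V), (z : Module.End ℝ V)⁆ ∈ gSpan m br),
        ω ⟨⁅(x : Module.End ℝ V), (y : Module.End ℝ V)⁆, hxy⟩ z =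
          - ω y ⟨⁅(x : Module.End ℝ V), (z : Module.End ℝ V)⁆, hxz⟩) := by
  obtain ⟨ω, hω⟩ := exists_form br S hSymCond
  refine ⟨ω, fun u v => hω _ v _, ?_, ?_, ?_⟩
  · intro x y
    have h1 : ω x = ω.flip x := by
      refine gSpan_induction br _ _ fun v hv => ?_
      have h2 : ω.flip ⟨Dop m br v, hv⟩ = ω ⟨Dop m br v, hv⟩ := by
        refine gSpan_induction br _ _ fun u hu => ?_
        rw [LinearMap.flip_apply, hω, hω]
        exact hSymCond u v
      exact LinearMap.congr_fun h2 x
    exact LinearMap.congr_fun h1 y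
  · intro x hx
    ext a
    refine hSnd _ fun w => ?_
    have h := hω x (update w 0 a) (Submodule.subset_span ⟨_, rfl⟩)
    rw [hx, pairB_apply] at h
    simpa using h.symm
  · intro x y z hxy hxz
    let ad : gSpan m br →ₗ[ℝ] gSpan m br :=
      { toFun := fun z => ⟨⁅(x : Module.End ℝ V), (z : Module.End ℝ V)⁆,
          lie_mem_gSpan br hFI _ _ x.2 z.2⟩
        map_add' := fun a b => Subtype.ext (end_lie_add _ _ _)
        map_smul' := fun c a => Subtype.ext (end_lie_smul _ _ _) }
    have h : ω ⟨⁅(x : Module.End ℝ V), (y : Module.End ℝ V)⁆, hxy⟩ = - (ω y ∘ₗ ad) := by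
      refine gSpan_induction br _ _ fun w hw => ?_
      rw [hω, pairB_invariant br S hUnit _ _ x.2, LinearMap.neg_apply, LinearMap.comp_apply]
      have e : ad ⟨Dop m br w, hw⟩ = ∑ i, (⟨Dop m br (update w i (x.1 (w i))),
          Submodule.subset_span ⟨_, rfl⟩⟩ : gSpan m br) := by
        apply Subtype.ext
        rw [AddSubmonoidClass.coe_finsetSum]
        exact bracket_Dop br hFI x.1 x.2 w
      rw [e, map_sum]
      congr 1
      exact Finset.sum_congr rfl fun i _ => (hω _ _ _).symm
    exact LinearMap.congr_fun h z
end

section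
/- Let n ≥ 2 and let (V, [·,…,·]) be an n-Leibniz algebra over ℝ. Equip the (n-1)-fold tensor power T = V ⊗ ⋯ ⊗ V (n−1 factors) with the bilinear bracket [·,·]_F determined on pure tensors by [u₁⊗⋯⊗u_{n-1}, v₁⊗⋯⊗v_{n-1}]_F = Σ_{i=1}^{n-1} v₁⊗⋯⊗v_{i-1}⊗[u₁,…,u_{n-1},v_i]⊗v_{i+1}⊗⋯⊗v_{n-1}. Then (T, [·,·]_F) is a (left) Leibniz algebra: [U,[V,W]_F]_F = [[U,V]_F,W]_F + [V,[U,W]_F]_F for all U,V,W ∈ T. -/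
open Function

/-- Let `n = m + 2 ≥ 2` and let `(V, [·,…,·])` be an `n`-Leibniz algebra over
`ℝ`.  Equip the `(n-1)`-fold tensor power `T = V ⊗ ⋯ ⊗ V` with the bilinear bracket `[·,·]_F`
determined on pure tensors by
`[u₁⊗⋯⊗u_{n-1}, v₁⊗⋯⊗v_{n-1}]_F = Σ_i v₁⊗⋯⊗[u₁,…,u_{n-1},v_i]⊗⋯⊗v_{n-1}`.
Then `(T, [·,·]_F)` is a (left) Leibniz algebra:
`[U,[W,Z]_F]_F = [[U,W]_F,Z]_F + [W,[U,Z]_F]_F`. -/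
theorem statement5 (m : ℕ) {V : Type*} [AddCommGroup V] [Module ℝ V]
    (br : MultilinearMap ℝ (fun _ : Fin (m + 2) => V) V)
    -- fundamental identity
    (hFI : ∀ (u : Fin (m + 1) → V) (v : Fin (m + 2) → V),
      br (Fin.snoc u (br v)) =
        ∑ i : Fin (m + 2), br (Function.update v i (br (Fin.snoc u (v i)))))
    -- the bilinear bracket `[·,·]_F` on the tensor power, determined on pure tensors
    (brF : PiTensorProduct ℝ (fun _ : Fin (m + 1) => V) →ₗ[ℝ]
      PiTensorProduct ℝ (fun _ : Fin (m + 1) => V) →ₗ[ℝ]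
        PiTensorProduct ℝ (fun _ : Fin (m + 1) => V))
    (hbrF : ∀ u v : Fin (m + 1) → V,
      brF (PiTensorProduct.tprod ℝ u) (PiTensorProduct.tprod ℝ v) =
        ∑ i : Fin (m + 1),
          PiTensorProduct.tprod ℝ (Function.update v i (br (Fin.snoc u (v i))))) :
    ∀ U W Z : PiTensorProduct ℝ (fun _ : Fin (m + 1) => V),
      brF U (brF W Z) = brF (brF U W) Z + brF W (brF U Z) := by
  have hD : ∀ (u w : Fin (m + 1) → V) (x : V),
      br (Fin.snoc u (br (Fin.snoc w x))) =
        (∑ k, br (Fin.snoc (Function.update w k (br (Fin.snoc u (w k)))) x)) +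
          br (Fin.snoc w (br (Fin.snoc u x))) := by
    intro u w x
    have h := hFI u (Fin.snoc w x)
    rw [Fin.sum_univ_castSucc] at h
    simpa [Fin.snoc_update, Fin.update_snoc_last] using h
  have key : ∀ u w z : Fin (m + 1) → V,
      brF (PiTensorProduct.tprod ℝ u) (brF (PiTensorProduct.tprod ℝ w) (PiTensorProduct.tprod ℝ z))
      = brF (brF (PiTensorProduct.tprod ℝ u) (PiTensorProduct.tprod ℝ w)) (PiTensorProduct.tprod ℝ z)
      + brF (PiTensorProduct.tprod ℝ w)
          (brF (PiTensorProduct.tprod ℝ u) (PiTensorProduct.tprod ℝ z)) := by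
    intro u w z
    simp only [hbrF, map_sum, LinearMap.sum_apply]
    have hA : ∀ i j : Fin (m + 1),
        PiTensorProduct.tprod ℝ (Function.update (Function.update z i (br (Fin.snoc w (z i)))) j
          (br (Fin.snoc u (Function.update z i (br (Fin.snoc w (z i))) j)))) =
        (if i = j then ∑ k, PiTensorProduct.tprod ℝ (Function.update z i
          (br (Fin.snoc (Function.update w k (br (Fin.snoc u (w k)))) (z i)))) else 0) +
        PiTensorProduct.tprod ℝ (Function.update (Function.update z j (br (Fin.snoc u (z j)))) i
          (br (Fin.snoc w (Function.update z j (br (Fin.snoc u (z j))) i)))) := by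
      intro i j
      by_cases hij : i = j
      · subst hij
        simp only [Function.update_self, Function.update_idem, if_true]
        rw [hD, MultilinearMap.map_update_add, MultilinearMap.map_update_sum]
      · rw [if_neg hij, zero_add, Function.update_of_ne hij, Function.update_of_ne (Ne.symm hij),
          Function.update_comm hij]
    simp_rw [hA, Finset.sum_add_distrib]
    congr 1
    · simp only [Finset.sum_ite_eq, Finset.mem_univ, if_true]
      rw [Finset.sum_comm]
    · rw [Finset.sum_comm]
  intro U W Z
  induction U using PiTensorProduct.induction_on with
  | add a b ha hb => simp only [map_add, LinearMap.add_apply, ha, hb]; abel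
  | smul_tprod r u =>
    induction W using PiTensorProduct.induction_on with
    | add a b ha hb => simp only [map_add, LinearMap.add_apply, ha, hb]; abel
    | smul_tprod s w =>
      induction Z using PiTensorProduct.induction_on with
      | add a b ha hb => simp only [map_add, ha, hb]; abel
      | smul_tprod t z =>
        simp only [map_smul, LinearMap.smul_apply]
        rw [key]
        simp only [smul_add]
        simp only [smul_smul]
        congr 2 <;> ring
end

section
/- Let n ≥ 2 and let (V, [·,…,·], S) be a generalized metric n-Leibniz algebra over ℝ. Let B be the bilinear form on the (n−1)-fold tensor power T = V ⊗ ⋯ ⊗ V determined on pure tensors by B(u₁⊗⋯⊗u_{n-1}, v₁⊗⋯⊗v_{n-1}) = S([u₁,…,u_{n-1},v₁], v₂,…,v_{n-1}), and let [·,·]_F be the bracket on T determined on pure tensors by [u₁⊗⋯⊗u_{n-1}, v₁⊗⋯⊗v_{n-1}]_F = Σ_{i=1}^{n-1} v₁⊗⋯⊗[u₁,…,u_{n-1},v_i]⊗⋯⊗v_{n-1}. Then B is symmetric (B(U,W) = B(W,U)) and associative-invariant: B(U, [W,Z]_F) = B([U,W]_F, Z) for all U, W, Z ∈ T. -/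
open Function

/-- Let `n = m + 2 ≥ 2` and let `(V, [·,…,·], S)` be a generalized metric
`n`-Leibniz algebra over `ℝ`.  Let `B` be the bilinear form on the `(n-1)`-fold tensor power
`T` determined on pure tensors by
`B(u₁⊗⋯⊗u_{n-1}, v₁⊗⋯⊗v_{n-1}) = S([u₁,…,u_{n-1},v₁], v₂,…,v_{n-1})`, and let `[·,·]_F` be
the bracket on `T` determined on pure tensors by
`[u₁⊗⋯⊗u_{n-1}, v₁⊗⋯⊗v_{n-1}]_F = Σᵢ v₁⊗⋯⊗[u₁,…,u_{n-1},v_i]⊗⋯⊗v_{n-1}`.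
Then `B` is symmetric and associative-invariant: `B(U, [W,Z]_F) = B([U,W]_F, Z)`. -/
theorem statement7 (m : ℕ) {V : Type*} [AddCommGroup V] [Module ℝ V]
    (br : MultilinearMap ℝ (fun _ : Fin (m + 2) => V) V)
    (S : MultilinearMap ℝ (fun _ : Fin (m + 1) => V) ℝ)
    -- fundamental identity
    (hFI : ∀ (u : Fin (m + 1) → V) (v : Fin (m + 2) → V),
      br (Fin.snoc u (br v)) =
        ∑ i : Fin (m + 2), br (Function.update v i (br (Fin.snoc u (v i)))))
    -- `S` is symmetric
    (hSsymm : ∀ (σ : Equiv.Perm (Fin (m + 1))) (w : Fin (m + 1) → V), S (w ∘ σ) = S w)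
    -- `S` is non-degenerate
    (hSnd : ∀ u : V, (∀ w : Fin (m + 1) → V, S (Function.update w 0 u) = 0) → u = 0)
    -- unitarity condition
    (hUnit : ∀ (u w : Fin (m + 1) → V),
      ∑ i : Fin (m + 1), S (Function.update w i (br (Fin.snoc u (w i)))) = 0)
    -- symmetry condition
    (hSymCond : ∀ (u v : Fin (m + 1) → V),
      S (Function.update v 0 (br (Fin.snoc u (v 0)))) =
        S (Function.update u 0 (br (Fin.snoc v (u 0)))))
    -- the bilinear form `B` on the tensor power, determined on pure tensors
    (B : PiTensorProduct ℝ (fun _ : Fin (m + 1) => V) →ₗ[ℝ]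
      PiTensorProduct ℝ (fun _ : Fin (m + 1) => V) →ₗ[ℝ] ℝ)
    (hB : ∀ u v : Fin (m + 1) → V,
      B (PiTensorProduct.tprod ℝ u) (PiTensorProduct.tprod ℝ v) =
        S (Function.update v 0 (br (Fin.snoc u (v 0)))))
    -- the bilinear bracket `[·,·]_F` on the tensor power, determined on pure tensors
    (brF : PiTensorProduct ℝ (fun _ : Fin (m + 1) => V) →ₗ[ℝ]
      PiTensorProduct ℝ (fun _ : Fin (m + 1) => V) →ₗ[ℝ]
        PiTensorProduct ℝ (fun _ : Fin (m + 1) => V))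
    (hbrF : ∀ u v : Fin (m + 1) → V,
      brF (PiTensorProduct.tprod ℝ u) (PiTensorProduct.tprod ℝ v) =
        ∑ i : Fin (m + 1),
          PiTensorProduct.tprod ℝ (Function.update v i (br (Fin.snoc u (v i))))) :
    (∀ U W : PiTensorProduct ℝ (fun _ : Fin (m + 1) => V), B U W = B W U) ∧
    (∀ U W Z : PiTensorProduct ℝ (fun _ : Fin (m + 1) => V),
      B U (brF W Z) = B (brF U W) Z) := by
  have hext : ∀ P : PiTensorProduct ℝ (fun _ : Fin (m + 1) => V) → Prop,
      (∀ u, P (PiTensorProduct.tprod ℝ u)) → (∀ (r : ℝ) x, P x → P (r • x)) →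
      (∀ x y, P x → P y → P (x + y)) → ∀ x, P x := by
    intro P h1 h2 h3 x
    induction x using PiTensorProduct.induction_on with
    | smul_tprod r f => exact h2 r _ (h1 f)
    | add x y hx hy => exact h3 x y hx hy
  constructor
  · intro U W
    refine hext (fun U => B U W = B W U) ?_ ?_ ?_ U
    · intro u
      refine hext (fun W => B (PiTensorProduct.tprod ℝ u) W = B W (PiTensorProduct.tprod ℝ u))
        ?_ ?_ ?_ W
      · intro w
        rw [hB, hB, hSymCond]
      · intro r x hx
        simp [hx]
      · intro x y hx hy
        simp [hx, hy]
    · intro r x hx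
      simp [hx]
    · intro x y hx hy
      simp [hx, hy]
  · have key : ∀ u w z : Fin (m + 1) → V,
        B (PiTensorProduct.tprod ℝ u)
          (brF (PiTensorProduct.tprod ℝ w) (PiTensorProduct.tprod ℝ z)) =
        B (brF (PiTensorProduct.tprod ℝ u) (PiTensorProduct.tprod ℝ w))
          (PiTensorProduct.tprod ℝ z) := by
      intro u w z
      have e1 := hUnit w (Function.update z 0 (br (Fin.snoc u (z 0))))
      have e2 := hFI u (Fin.snoc w (z 0))
      rw [Fin.sum_univ_castSucc] at e2
      simp only [Fin.snoc_castSucc, Fin.snoc_last, Fin.update_snoc_last,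
        ← Fin.snoc_update] at e2
      have e3 := congrArg (fun x => S (Function.update z 0 x)) e2
      simp only [MultilinearMap.map_update_add, MultilinearMap.map_update_sum] at e3
      rw [Fin.sum_univ_succ] at e1
      simp only [Function.update_idem, Function.update_self, ne_eq, Fin.succ_ne_zero,
        not_false_eq_true, Function.update_of_ne] at e1
      have e4 : ∀ i : Fin m, Function.update (Function.update z 0 (br (Fin.snoc u (z 0)))) i.succ
          (br (Fin.snoc w (z i.succ))) =
          Function.update (Function.update z i.succ (br (Fin.snoc w (z i.succ)))) 0
            (br (Fin.snoc u (z 0))) := fun i =>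
        Function.update_comm (Fin.succ_ne_zero i).symm _ _ _
      simp only [e4] at e1
      rw [hbrF, hbrF, map_sum, map_sum, LinearMap.sum_apply]
      simp only [hB]
      rw [Fin.sum_univ_succ]
      simp only [Function.update_idem, Function.update_self, ne_eq, (Fin.succ_ne_zero _).symm,
        not_false_eq_true, Function.update_of_ne]
      linarith
    intro U W Z
    refine hext (fun U => B U (brF W Z) = B (brF U W) Z) ?_ ?_ ?_ U
    · intro u
      refine hext (fun W => B (PiTensorProduct.tprod ℝ u) (brF W Z) =
        B (brF (PiTensorProduct.tprod ℝ u) W) Z) ?_ ?_ ?_ W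
      · intro w
        refine hext (fun Z => B (PiTensorProduct.tprod ℝ u) (brF (PiTensorProduct.tprod ℝ w) Z) =
          B (brF (PiTensorProduct.tprod ℝ u) (PiTensorProduct.tprod ℝ w)) Z) ?_ ?_ ?_ Z
        · exact key u w
        · intro r x hx
          simp [hx]
        · intro x y hx hy
          simp [hx, hy]
      · intro r x hx
        simp [hx]
      · intro x y hx hy
        simp [hx, hy]
    · intro r x hx
      simp [hx]
    · intro x y hx hy
      simp [hx, hy]
end

section
/- Let n ≥ 2 and let (V, [·,…,·], S) be a generalized metric n-Leibniz algebra over ℝ. Let D̂ : V⊗⋯⊗V (n−1 factors) → gl(V) be the linear map induced by the multilinear map D(u₁,…,u_{n-1})v = [u₁,…,u_{n-1},v], and let B be the bilinear form on the tensor power determined on pure tensors by B(u₁⊗⋯⊗u_{n-1}, v₁⊗⋯⊗v_{n-1}) = S([u₁,…,u_{n-1},v₁], v₂,…,v_{n-1}). Then B is non-degenerate (B(U,W) = 0 for all W implies U = 0) if and only if ker D̂ = 0. -/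
open Function

/-- Let `n = m + 2 ≥ 2` and let `(V, [·,…,·], S)` be a generalized metric
`n`-Leibniz algebra over `ℝ`.  Let `D̂` be the linear map from the `(n-1)`-fold tensor power
of `V` to `gl(V)` induced by `D`, and let `B` be the bilinear form on the tensor power
determined on pure tensors by `B(u₁⊗⋯⊗u_{n-1}, v₁⊗⋯⊗v_{n-1}) = S([u₁,…,u_{n-1},v₁],
v₂,…,v_{n-1})`.  Then `B` is non-degenerate if and only if `ker D̂ = 0`. -/
theorem statement8 (m : ℕ) {V : Type*} [AddCommGroup V] [Module ℝ V]
    (br : MultilinearMap ℝ (fun _ : Fin (m + 2) => V) V)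
    (S : MultilinearMap ℝ (fun _ : Fin (m + 1) => V) ℝ)
    -- fundamental identity
    (hFI : ∀ (u : Fin (m + 1) → V) (v : Fin (m + 2) → V),
      br (Fin.snoc u (br v)) =
        ∑ i : Fin (m + 2), br (Function.update v i (br (Fin.snoc u (v i)))))
    -- `S` is symmetric
    (hSsymm : ∀ (σ : Equiv.Perm (Fin (m + 1))) (w : Fin (m + 1) → V), S (w ∘ σ) = S w)
    -- `S` is non-degenerate
    (hSnd : ∀ u : V, (∀ w : Fin (m + 1) → V, S (Function.update w 0 u) = 0) → u = 0)
    -- unitarity condition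
    (hUnit : ∀ (u w : Fin (m + 1) → V),
      ∑ i : Fin (m + 1), S (Function.update w i (br (Fin.snoc u (w i)))) = 0)
    -- symmetry condition
    (hSymCond : ∀ (u v : Fin (m + 1) → V),
      S (Function.update v 0 (br (Fin.snoc u (v 0)))) =
        S (Function.update u 0 (br (Fin.snoc v (u 0)))))
    -- `D̂`, the linear map induced by the multilinear map `D` on the tensor power
    (Dhat : PiTensorProduct ℝ (fun _ : Fin (m + 1) => V) →ₗ[ℝ] Module.End ℝ V)
    (hDhat : ∀ u : Fin (m + 1) → V, Dhat (PiTensorProduct.tprod ℝ u) = Dop m br u)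
    -- the bilinear form `B` on the tensor power, determined on pure tensors
    (B : PiTensorProduct ℝ (fun _ : Fin (m + 1) => V) →ₗ[ℝ]
      PiTensorProduct ℝ (fun _ : Fin (m + 1) => V) →ₗ[ℝ] ℝ)
    (hB : ∀ u v : Fin (m + 1) → V,
      B (PiTensorProduct.tprod ℝ u) (PiTensorProduct.tprod ℝ v) =
        S (Function.update v 0 (br (Fin.snoc u (v 0))))) :
    (∀ U : PiTensorProduct ℝ (fun _ : Fin (m + 1) => V),
        (∀ W : PiTensorProduct ℝ (fun _ : Fin (m + 1) => V), B U W = 0) → U = 0) ↔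
      LinearMap.ker Dhat = ⊥ := by
  have key : ∀ (v : Fin (m + 1) → V) (U : PiTensorProduct ℝ (fun _ : Fin (m + 1) => V)),
      B U (PiTensorProduct.tprod ℝ v) = S (Function.update v 0 (Dhat U (v 0))) := by
    intro v U
    induction U using PiTensorProduct.induction_on with
    | smul_tprod r u =>
      have h1 : B (PiTensorProduct.tprod ℝ u) (PiTensorProduct.tprod ℝ v) =
          S (Function.update v 0 (Dhat (PiTensorProduct.tprod ℝ u) (v 0))) := by
        rw [hB, hDhat]
        rfl
      rw [map_smul, map_smul, LinearMap.smul_apply, LinearMap.smul_apply, h1,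
        S.map_update_smul]
    | add x y hx hy =>
      rw [map_add, map_add, LinearMap.add_apply, LinearMap.add_apply, hx, hy,
        S.map_update_add]
  have main : ∀ U : PiTensorProduct ℝ (fun _ : Fin (m + 1) => V),
      (∀ W : PiTensorProduct ℝ (fun _ : Fin (m + 1) => V), B U W = 0) ↔ Dhat U = 0 := by
    intro U
    constructor
    · intro h
      ext x
      apply hSnd
      intro w
      have h2 := key (Function.update w 0 x) U
      rw [h] at h2
      simpa using h2.symm
    · intro h
      have h3 : B U = 0 := by
        apply PiTensorProduct.ext
        ext v
        have h4 := key v U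
        rw [h] at h4
        have h5 : S (Function.update v 0 0) = 0 := S.map_update_zero v 0
        simpa [h5] using h4
      intro W
      rw [h3, LinearMap.zero_apply]
  rw [LinearMap.ker_eq_bot']
  exact forall_congr' fun U => by rw [main U]
end

section
/- Let n ≥ 2 and let (V, [·,…,·], S) be a generalized metric n-Leibniz algebra over ℝ. Let d_V ∈ gl(V) be a generalized orthogonal derivation, i.e. d_V[u₁,…,u_n] = Σ_{i=1}^{n}[u₁,…,d_V u_i,…,u_n] and Σ_{i=1}^{n-1} S(v₁,…,d_V v_i,…,v_{n-1}) = 0 for all arguments in V. Let D(u₁,…,u_{n-1}) ∈ gl(V) be given by D(u₁,…,u_{n-1})v = [u₁,…,u_{n-1},v], let g be the linear span of {D(u₁,…,u_{n-1})} in gl(V), and let ω be the bilinear form on g with ω(D(u₁,…,u_{n-1}),D(v₁,…,v_{n-1})) = S([u₁,…,u_{n-1},v₁],v₂,…,v_{n-1}). Then: (i) for each x ∈ g the commutator [d_V, x] lies in g, and the map d_g(x) := [d_V, x] satisfies d_g(D(w₁,…,w_{n-1})) = Σ_{i=1}^{n-1} D(w₁,…,d_V w_i,…,w_{n-1}); (ii)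 d_g is a derivation of the Lie algebra g; and (iii) d_g is orthogonal: ω(d_g x, y) + ω(x, d_g y) = 0 for all x,y ∈ g. -/
open Function

/-- Let `n = m + 2 ≥ 2`, let `(V, [·,…,·], S)` be a generalized metric
`n`-Leibniz algebra over `ℝ` and let `d_V ∈ gl(V)` be a generalized orthogonal derivation.
Let `g` be the span of the operators `D(u₁,…,u_{n-1})` in `gl(V)` and let `ω` be the bilinear
form on `g` with `ω(D(u₁,…,u_{n-1}), D(v₁,…,v_{n-1})) = S([u₁,…,u_{n-1},v₁],v₂,…,v_{n-1})`.
Then: (i) `d_g(x) := [d_V, x]` maps `g` to `g` and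
`d_g(D(w₁,…,w_{n-1})) = Σᵢ D(w₁,…,d_V wᵢ,…,w_{n-1})`; (ii) `d_g` is a derivation of the Lie
algebra `g`; (iii) `d_g` is orthogonal: `ω(d_g x, y) + ω(x, d_g y) = 0`. -/
theorem statement14 (m : ℕ) {V : Type*} [AddCommGroup V] [Module ℝ V]
    (br : MultilinearMap ℝ (fun _ : Fin (m + 2) => V) V)
    (S : MultilinearMap ℝ (fun _ : Fin (m + 1) => V) ℝ)
    -- fundamental identity
    (hFI : ∀ (u : Fin (m + 1) → V) (v : Fin (m + 2) → V),
      br (Fin.snoc u (br v)) =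
        ∑ i : Fin (m + 2), br (Function.update v i (br (Fin.snoc u (v i)))))
    -- `S` is symmetric
    (hSsymm : ∀ (σ : Equiv.Perm (Fin (m + 1))) (w : Fin (m + 1) → V), S (w ∘ σ) = S w)
    -- `S` is non-degenerate
    (hSnd : ∀ u : V, (∀ w : Fin (m + 1) → V, S (Function.update w 0 u) = 0) → u = 0)
    -- unitarity condition
    (hUnit : ∀ (u w : Fin (m + 1) → V),
      ∑ i : Fin (m + 1), S (Function.update w i (br (Fin.snoc u (w i)))) = 0)
    -- symmetry condition
    (hSymCond : ∀ (u v : Fin (m + 1) → V),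
      S (Function.update v 0 (br (Fin.snoc u (v 0)))) =
        S (Function.update u 0 (br (Fin.snoc v (u 0)))))
    -- `d_V` is a derivation of the `n`-bracket
    (dV : Module.End ℝ V)
    (hdVder : ∀ w : Fin (m + 2) → V,
      dV (br w) = ∑ i : Fin (m + 2), br (Function.update w i (dV (w i))))
    -- `d_V` is generalized orthogonal
    (hdVorth : ∀ w : Fin (m + 1) → V,
      ∑ i : Fin (m + 1), S (Function.update w i (dV (w i))) = 0)
    -- the bilinear form `ω` on `g`, determined on the generators `D(u₁,…,u_{n-1})`
    (ω : (gSpan m br : Submodule ℝ (Module.End ℝ V)) →ₗ[ℝ]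
      (gSpan m br : Submodule ℝ (Module.End ℝ V)) →ₗ[ℝ] ℝ)
    (hω : ∀ u v : Fin (m + 1) → V,
      ω ⟨Dop m br u, Submodule.subset_span ⟨u, rfl⟩⟩
          ⟨Dop m br v, Submodule.subset_span ⟨v, rfl⟩⟩ =
        S (Function.update v 0 (br (Fin.snoc u (v 0))))) :
    -- (i) `d_g = [d_V, ·]` maps `g` to `g` and acts on generators as expected
    ((∀ x ∈ gSpan m br, ⁅dV, x⁆ ∈ gSpan m br) ∧
      (∀ w : Fin (m + 1) → V,
        ⁅dV, Dop m br w⁆ =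
          ∑ i : Fin (m + 1), Dop m br (Function.update w i (dV (w i))))) ∧
    -- (ii) `d_g` is a derivation of the Lie algebra `g`
    (∀ x ∈ gSpan m br, ∀ y ∈ gSpan m br,
      ⁅dV, ⁅x, y⁆⁆ = ⁅⁅dV, x⁆, y⁆ + ⁅x, ⁅dV, y⁆⁆) ∧
    -- (iii) `d_g` is orthogonal with respect to `ω`
    (∀ (x y : gSpan m br)
        (hx : ⁅dV, (x : Module.End ℝ V)⁆ ∈ gSpan m br)
        (hy : ⁅dV, (y : Module.End ℝ V)⁆ ∈ gSpan m br),
      ω ⟨⁅dV, (x : Module.End ℝ V)⁆, hx⟩ y + ω x ⟨⁅dV, (y : Module.End ℝ V)⁆, hy⟩ = 0) := by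
  have hb : ∀ a b : Module.End ℝ V, ⁅a, b⁆ = a * b - b * a := fun _ _ => rfl
  have b0 : ⁅dV, (0 : Module.End ℝ V)⁆ = 0 := by rw [hb, mul_zero, zero_mul, sub_zero]
  have badd : ∀ a b : Module.End ℝ V, ⁅dV, a + b⁆ = ⁅dV, a⁆ + ⁅dV, b⁆ := by
    intro a b
    simp only [hb, mul_add, add_mul]
    abel
  have bsmul : ∀ (c : ℝ) (a : Module.End ℝ V), ⁅dV, c • a⁆ = c • ⁅dV, a⁆ := by
    intro c a
    simp only [hb, mul_smul_comm, smul_mul_assoc, smul_sub]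
  have h2 : ∀ w : Fin (m + 1) → V, ⁅dV, Dop m br w⁆ =
      ∑ i : Fin (m + 1), Dop m br (Function.update w i (dV (w i))) := by
    intro w
    ext x
    have hd : ∀ (u : Fin (m + 1) → V) (v : V), Dop m br u v = br (Fin.snoc u v) :=
      fun _ _ => rfl
    rw [LieRing.of_associative_ring_bracket, LinearMap.sub_apply, Module.End.mul_apply,
      Module.End.mul_apply, LinearMap.sum_apply]
    simp only [hd]
    rw [hdVder, Fin.sum_univ_castSucc]
    simp only [Fin.snoc_castSucc, Fin.snoc_last, Fin.update_snoc_last, Fin.snoc_update,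
      add_sub_cancel_right]
  have h1 : ∀ x ∈ gSpan m br, ⁅dV, x⁆ ∈ gSpan m br := by
    intro x hx
    induction hx using Submodule.span_induction with
    | mem x h =>
      obtain ⟨w, rfl⟩ := h
      rw [h2]
      exact Submodule.sum_mem _ fun i _ => Submodule.subset_span ⟨_, rfl⟩
    | zero => rw [b0]; exact Submodule.zero_mem _
    | add x y _ _ hx hy => rw [badd]; exact Submodule.add_mem _ hx hy
    | smul c x _ hx => rw [bsmul]; exact Submodule.smul_mem _ c hx
  refine ⟨⟨h1, h2⟩, fun x _ y _ => by simp only [hb]; noncomm_ring, ?_⟩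
  -- `ω(x, D v) = S(x v₁, v₂, …)` for every `x ∈ g`
  have h3 : ∀ (x : Module.End ℝ V) (hx : x ∈ gSpan m br) (v : Fin (m + 1) → V),
      ω ⟨x, hx⟩ ⟨Dop m br v, Submodule.subset_span ⟨v, rfl⟩⟩ =
        S (Function.update v 0 (x (v 0))) := by
    intro x hx v
    induction hx using Submodule.span_induction with
    | mem x h =>
      obtain ⟨w, rfl⟩ := h
      exact hω w v
    | zero =>
      have : (⟨0, (gSpan m br).zero_mem⟩ : gSpan m br) = 0 := rfl
      erw [this]
      rw [map_zero, LinearMap.zero_apply, LinearMap.zero_apply]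
      exact (S.map_coord_zero (0 : Fin (m + 1)) (by simp)).symm
    | add x y hx' hy' hx hy =>
      have : (⟨x + y, (gSpan m br).add_mem hx' hy'⟩ : gSpan m br) = ⟨x, hx'⟩ + ⟨y, hy'⟩ := rfl
      erw [this]
      rw [map_add, LinearMap.add_apply, LinearMap.add_apply, S.map_update_add]
      exact congrArg₂ _ hx hy
    | smul c x hx' hx =>
      have : (⟨c • x, (gSpan m br).smul_mem c hx'⟩ : gSpan m br) = c • ⟨x, hx'⟩ := rfl
      erw [this]
      rw [map_smul, LinearMap.smul_apply, LinearMap.smul_apply, S.map_update_smul]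
      exact congrArg _ hx
  rintro ⟨x, hx0⟩ ⟨y, hy0⟩ hx hy
  simp only at hx hy ⊢
  induction hy0 using Submodule.span_induction with
  | mem y h =>
    obtain ⟨v, rfl⟩ := h
    have e : (⟨⁅dV, Dop m br v⁆, hy⟩ : gSpan m br) = ∑ i : Fin (m + 1),
        ⟨Dop m br (Function.update v i (dV (v i))), Submodule.subset_span ⟨_, rfl⟩⟩ := by
      apply Subtype.ext
      rw [AddSubmonoidClass.coe_finsetSum]
      exact h2 v
    rw [e, map_sum, h3]
    simp only [h3]
    have key := hdVorth (Function.update v 0 (x (v 0)))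
    rw [Fin.sum_univ_succ] at key ⊢
    simp only [Function.update_self, Function.update_idem] at key ⊢
    have hs : ∀ i : Fin m,
        S (Function.update (Function.update v i.succ (dV (v i.succ))) 0
          (x (Function.update v i.succ (dV (v i.succ)) 0))) =
        S (Function.update (Function.update v 0 (x (v 0))) i.succ
          (dV (Function.update v 0 (x (v 0)) i.succ))) := by
      intro i
      rw [Function.update_of_ne (Fin.succ_ne_zero i).symm,
        Function.update_of_ne (Fin.succ_ne_zero i),
        Function.update_comm (Fin.succ_ne_zero i)]
    simp only [hs]
    rw [LieRing.of_associative_ring_bracket, LinearMap.sub_apply, Module.End.mul_apply,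
      Module.End.mul_apply, S.map_update_sub]
    linarith
  | zero =>
    have a : (⟨0, (gSpan m br).zero_mem⟩ : gSpan m br) = 0 := rfl
    have b : (⟨⁅dV, (0 : Module.End ℝ V)⁆, hy⟩ : gSpan m br) = 0 := Subtype.ext (b0)
    erw [a, b]
    simp
  | add y z hy' hz' iy iz =>
    have a : (⟨y + z, (gSpan m br).add_mem hy' hz'⟩ : gSpan m br) = ⟨y, hy'⟩ + ⟨z, hz'⟩ := rfl
    have b : (⟨⁅dV, y + z⁆, hy⟩ : gSpan m br) =
        ⟨⁅dV, y⁆, h1 y hy'⟩ + ⟨⁅dV, z⁆, h1 z hz'⟩ := Subtype.ext (badd _ _)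
    have p := iy (h1 y hy')
    have q := iz (h1 z hz')
    erw [a, b]
    rw [map_add, map_add]
    linear_combination p + q
  | smul c y hy' iy =>
    have a : (⟨c • y, (gSpan m br).smul_mem c hy'⟩ : gSpan m br) = c • ⟨y, hy'⟩ := rfl
    have b : (⟨⁅dV, c • y⁆, hy⟩ : gSpan m br) =
        c • ⟨⁅dV, y⁆, h1 y hy'⟩ := Subtype.ext (bsmul _ _)
    have p := iy (h1 y hy')
    erw [a, b]
    rw [map_smul, map_smul, smul_eq_mul, smul_eq_mul]
    linear_combination c * p
end

section
/- Let n ≥ 2 and let (V, [·,…,·], S) be a generalized metric n-Leibniz algebra over ℝ. Let Φ_V : V → V be an invertible linear map that is a generalized orthogonal automorphism, i.e. Φ_V[u₁,…,u_n] = [Φ_V u₁,…,Φ_V u_n] and S(Φ_V v₁,…,Φ_V v_{n-1}) = S(v₁,…,v_{n-1}) for all arguments in V. Let D(u₁,…,u_{n-1}) ∈ gl(V) be given by D(u₁,…,u_{n-1})v = [u₁,…,u_{n-1},v], let g be the linear span of {D(u₁,…,u_{n-1})} in gl(V), and let ω be the bilinear form on g with ω(D(u₁,…,u_{n-1}),D(v₁,…,v_{n-1}))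 = S([u₁,…,u_{n-1},v₁],v₂,…,v_{n-1}). Then: (i) for each x ∈ g, Φ_V ∘ x ∘ Φ_V^{-1} lies in g, and the map Φ_g(x) := Φ_V ∘ x ∘ Φ_V^{-1} satisfies Φ_g(D(w₁,…,w_{n-1})) = D(Φ_V w₁,…,Φ_V w_{n-1}); (ii) Φ_g is a Lie algebra automorphism of g; and (iii) Φ_g is orthogonal: ω(Φ_g x, Φ_g y) = ω(x,y) for all x,y ∈ g. -/
open Function

/-- Conjugation `x ↦ Φ_V ∘ x ∘ Φ_V⁻¹` on `gl(V)` by an invertible linear map `Φ_V`. -/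
def conjEnd {V : Type*} [AddCommGroup V] [Module ℝ V] (Φ : V ≃ₗ[ℝ] V)
    (x : Module.End ℝ V) : Module.End ℝ V :=
  Φ.toLinearMap ∘ₗ x ∘ₗ Φ.symm.toLinearMap

/-- Let `n = m + 2 ≥ 2`, let `(V, [·,…,·], S)` be a generalized metric
`n`-Leibniz algebra over `ℝ` and let `Φ_V` be a generalized orthogonal automorphism.  Let `g`
be the span of the operators `D(u₁,…,u_{n-1})` in `gl(V)` and let `ω` be the bilinear form on
`g` with `ω(D(u₁,…,u_{n-1}), D(v₁,…,v_{n-1})) = S([u₁,…,u_{n-1},v₁],v₂,…,v_{n-1})`.  Then: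
(i) `Φ_g(x) := Φ_V ∘ x ∘ Φ_V⁻¹` maps `g` to `g` and
`Φ_g(D(w₁,…,w_{n-1})) = D(Φ_V w₁,…,Φ_V w_{n-1})`; (ii) `Φ_g` is a Lie algebra automorphism of
`g`; (iii) `Φ_g` is orthogonal: `ω(Φ_g x, Φ_g y) = ω(x, y)`. -/
theorem statement17 (m : ℕ) {V : Type*} [AddCommGroup V] [Module ℝ V]
    (br : MultilinearMap ℝ (fun _ : Fin (m + 2) => V) V)
    (S : MultilinearMap ℝ (fun _ : Fin (m + 1) => V) ℝ)
    -- fundamental identity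
    (hFI : ∀ (u : Fin (m + 1) → V) (v : Fin (m + 2) → V),
      br (Fin.snoc u (br v)) =
        ∑ i : Fin (m + 2), br (Function.update v i (br (Fin.snoc u (v i)))))
    -- `S` is symmetric
    (hSsymm : ∀ (σ : Equiv.Perm (Fin (m + 1))) (w : Fin (m + 1) → V), S (w ∘ σ) = S w)
    -- `S` is non-degenerate
    (hSnd : ∀ u : V, (∀ w : Fin (m + 1) → V, S (Function.update w 0 u) = 0) → u = 0)
    -- unitarity condition
    (hUnit : ∀ (u w : Fin (m + 1) → V),
      ∑ i : Fin (m + 1), S (Function.update w i (br (Fin.snoc u (w i)))) = 0)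
    -- symmetry condition
    (hSymCond : ∀ (u v : Fin (m + 1) → V),
      S (Function.update v 0 (br (Fin.snoc u (v 0)))) =
        S (Function.update u 0 (br (Fin.snoc v (u 0)))))
    -- `Φ_V` is an invertible linear map which is an automorphism of the `n`-bracket
    (ΦV : V ≃ₗ[ℝ] V)
    (hΦbr : ∀ w : Fin (m + 2) → V, ΦV (br w) = br (fun i => ΦV (w i)))
    -- `Φ_V` preserves `S`
    (hΦS : ∀ w : Fin (m + 1) → V, S (fun i => ΦV (w i)) = S w)
    -- the bilinear form `ω` on `g`, determined on the generators `D(u₁,…,u_{n-1})`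
    (ω : (gSpan m br : Submodule ℝ (Module.End ℝ V)) →ₗ[ℝ]
      (gSpan m br : Submodule ℝ (Module.End ℝ V)) →ₗ[ℝ] ℝ)
    (hω : ∀ u v : Fin (m + 1) → V,
      ω ⟨Dop m br u, Submodule.subset_span ⟨u, rfl⟩⟩
          ⟨Dop m br v, Submodule.subset_span ⟨v, rfl⟩⟩ =
        S (Function.update v 0 (br (Fin.snoc u (v 0))))) :
    -- (i) `Φ_g = Φ_V ∘ · ∘ Φ_V⁻¹` maps `g` to `g` and acts on generators as expected
    ((∀ x ∈ gSpan m br, conjEnd ΦV x ∈ gSpan m br) ∧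
      (∀ w : Fin (m + 1) → V,
        conjEnd ΦV (Dop m br w) = Dop m br (fun i => ΦV (w i)))) ∧
    -- (ii) `Φ_g` is a Lie algebra automorphism of `g`
    ((∀ x ∈ gSpan m br, ∀ y ∈ gSpan m br,
        conjEnd ΦV ⁅x, y⁆ = ⁅conjEnd ΦV x, conjEnd ΦV y⁆) ∧
      (∀ y ∈ gSpan m br, ∃ x ∈ gSpan m br, conjEnd ΦV x = y)) ∧
    -- (iii) `Φ_g` is orthogonal with respect to `ω`
    (∀ (x y : gSpan m br)
        (hx : conjEnd ΦV (x : Module.End ℝ V) ∈ gSpan m br)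
        (hy : conjEnd ΦV (y : Module.End ℝ V) ∈ gSpan m br),
      ω ⟨conjEnd ΦV (x : Module.End ℝ V), hx⟩ ⟨conjEnd ΦV (y : Module.End ℝ V), hy⟩ =
        ω x y) := by
  have hgen : ∀ w : Fin (m + 1) → V,
      conjEnd ΦV (Dop m br w) = Dop m br (fun i => ΦV (w i)) := by
    intro w
    ext v
    change ΦV (br (Fin.snoc w (ΦV.symm v))) = br (Fin.snoc (fun i => ΦV (w i)) v)
    rw [hΦbr]
    congr 1
    ext i
    refine Fin.lastCases ?_ (fun j => ?_) i <;> simp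
  have hadd : ∀ x y, conjEnd ΦV (x + y) = conjEnd ΦV x + conjEnd ΦV y := by
    intro x y; ext v; simp [conjEnd]
  have hsmul : ∀ (c : ℝ) x, conjEnd ΦV (c • x) = c • conjEnd ΦV x := by
    intro c y; ext v; simp [conjEnd]
  have hzero : conjEnd ΦV 0 = 0 := by
    ext v; simp [conjEnd]
  have hmem : ∀ x ∈ gSpan m br, conjEnd ΦV x ∈ gSpan m br := by
    intro x hx
    unfold gSpan at hx
    induction hx using Submodule.span_induction with
    | mem x h =>
      obtain ⟨w, rfl⟩ := h
      rw [hgen]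
      exact Submodule.subset_span ⟨_, rfl⟩
    | zero => rw [hzero]; exact Submodule.zero_mem _
    | add x y _ _ hx hy => rw [hadd]; exact Submodule.add_mem _ hx hy
    | smul c x _ hx => rw [hsmul]; exact Submodule.smul_mem _ c hx
  refine ⟨⟨hmem, hgen⟩, ⟨?_, ?_⟩, ?_⟩
  · intro x _ y _
    ext v
    simp [conjEnd, Ring.lie_def]
  · intro y hy
    unfold gSpan at hy
    induction hy using Submodule.span_induction with
    | mem x h =>
      obtain ⟨w, rfl⟩ := h
      refine ⟨Dop m br (fun i => ΦV.symm (w i)), Submodule.subset_span ⟨_, rfl⟩, ?_⟩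
      rw [hgen]
      simp
    | zero => exact ⟨0, Submodule.zero_mem _, hzero⟩
    | add x y _ _ hx hy =>
      obtain ⟨a, ha, rfl⟩ := hx
      obtain ⟨b, hb, rfl⟩ := hy
      exact ⟨a + b, Submodule.add_mem _ ha hb, hadd a b⟩
    | smul c x _ hx =>
      obtain ⟨a, ha, rfl⟩ := hx
      exact ⟨c • a, Submodule.smul_mem _ c ha, hsmul c a⟩
  · let Φg : gSpan m br →ₗ[ℝ] gSpan m br :=
      { toFun := fun x => ⟨conjEnd ΦV x, hmem x x.2⟩
        map_add' := fun x y => Subtype.ext (hadd x y)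
        map_smul' := fun c x => Subtype.ext (hsmul c x) }
    have hDg : ∀ w : Fin (m + 1) → V, Φg ⟨Dop m br w, Submodule.subset_span ⟨w, rfl⟩⟩ =
        ⟨Dop m br (fun i => ΦV (w i)), Submodule.subset_span ⟨_, rfl⟩⟩ :=
      fun w => Subtype.ext (hgen w)
    have key : ∀ u v : Fin (m + 1) → V,
        ω (Φg ⟨Dop m br u, Submodule.subset_span ⟨u, rfl⟩⟩)
          (Φg ⟨Dop m br v, Submodule.subset_span ⟨v, rfl⟩⟩) =
        ω ⟨Dop m br u, Submodule.subset_span ⟨u, rfl⟩⟩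
          ⟨Dop m br v, Submodule.subset_span ⟨v, rfl⟩⟩ := by
      intro u v
      rw [hDg, hDg, hω, hω, ← hΦS (Function.update v 0 _)]
      congr 1
      ext i
      by_cases hi : i = 0
      · subst hi
        have := LinearMap.congr_fun (hgen u) (ΦV (v 0))
        simp only [Function.update_self]
        simpa [conjEnd, Dop] using this.symm
      · simp [Function.update_of_ne hi]
    have main : ∀ x (hx : x ∈ gSpan m br) y (hy : y ∈ gSpan m br),
        ω (Φg ⟨x, hx⟩) (Φg ⟨y, hy⟩) = ω ⟨x, hx⟩ ⟨y, hy⟩ := by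
      intro x hx y hy
      refine Submodule.span_induction
        (p := fun x hx => ω (Φg ⟨x, hx⟩) (Φg ⟨y, hy⟩) = ω ⟨x, hx⟩ ⟨y, hy⟩)
        ?_ ?_ ?_ ?_ hx
      · rintro _ ⟨u, rfl⟩
        refine Submodule.span_induction
          (p := fun y hy => ω (Φg ⟨Dop m br u, Submodule.subset_span ⟨u, rfl⟩⟩) (Φg ⟨y, hy⟩) =
            ω ⟨Dop m br u, Submodule.subset_span ⟨u, rfl⟩⟩ ⟨y, hy⟩)
          ?_ ?_ ?_ ?_ hy
        · rintro _ ⟨v, rfl⟩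
          exact key u v
        · have h0 : (⟨0, Submodule.zero_mem _⟩ : gSpan m br) = 0 := rfl
          erw [h0]
          simp only [map_zero]
        · intro a b ha hb h1 h2
          have h0 : (⟨a + b, Submodule.add_mem _ ha hb⟩ : gSpan m br) = ⟨a, ha⟩ + ⟨b, hb⟩ := rfl
          erw [h0]
          simp only [map_add]
          exact congrArg₂ (· + ·) h1 h2
        · intro c a ha h1
          have h0 : (⟨c • a, Submodule.smul_mem _ c ha⟩ : gSpan m br) = c • ⟨a, ha⟩ := rfl
          erw [h0]
          simp only [map_smul]
          exact congrArg (c • ·) h1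
      · have h0 : (⟨0, Submodule.zero_mem _⟩ : gSpan m br) = 0 := rfl
        erw [h0]
        simp only [map_zero, LinearMap.zero_apply]
      · intro a b ha hb h1 h2
        have h0 : (⟨a + b, Submodule.add_mem _ ha hb⟩ : gSpan m br) = ⟨a, ha⟩ + ⟨b, hb⟩ := rfl
        erw [h0]
        simp only [map_add, LinearMap.add_apply]
        exact congrArg₂ (· + ·) h1 h2
      · intro c a ha h1
        have h0 : (⟨c • a, Submodule.smul_mem _ c ha⟩ : gSpan m br) = c • ⟨a, ha⟩ := rfl
        erw [h0]
        simp only [map_smul, LinearMap.smul_apply]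
        exact congrArg (c • ·) h1
    intro x y hx hy
    exact main x x.2 y y.2
end
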